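/- Let $p$ be a prime number and let $\Lambda = \mathbb{Z}_p[[T]]$ be the ring of formal power series in one variable over the ring of $p$-adic integers. Let $M$ be a finitely generated $\Lambda$-module. Then $M$ is finite as a set if and only if the annihilator ideal of $M$ in $\Lambda$ is not contained in any prime ideal of $\Lambda$ of height $1$ (i.e., if and only if $M$ is pseudo-null). -/

import Mathlib

/-!
In a Noetherian domain all of whose maximal ideals have height two, a prime that is not maximal has
height zero or one, and so lies below a prime of height one. A finitely generated module `M` is
therefore pseudo-null iff every prime containing its annihilator is maximal. If the residue fields
are finite, this is equivalent to the finiteness of `M`: on the one hand `M` has a finite filtration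
with quotients `R ⧸ P`, where `P` runs over primes containing the annihilator; on the other hand a
finite `M` makes all these `R ⧸ P` finite domains, hence fields.

Passing from `R` to `R⟦X⟧` raises the dimension of a Noetherian ring by one, since `X` is a
nonzerodivisor in the Jacobson radical, and preserves the residue field of a local ring.
-/

/-- A prime ideal `P` of `A` has height one if its height, as an element of the
prime spectrum of `A`, equals `1`. -/
def Ideal.HeightOne {A : Type*} [CommRing A] (P : Ideal A) (hP : P.IsPrime) : Prop :=
  Order.height (⟨P, hP⟩ : PrimeSpectrum A) = 1

section FiniteModules

variable {R M : Type*} [CommRing R] [AddCommGroup M] [Module R M]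

theorem finite_quotient_of_annihilator_le [Finite M] {I : Ideal R}
    (hI : Module.annihilator R M ≤ I) : Finite (R ⧸ I) := by
  have : Finite (AddMonoid.End M) := DFunLike.finite _
  have : Finite (R ⧸ Module.annihilator R M) :=
    Finite.of_injective _ (RingHom.kerLift_injective (Module.toAddMonoidEnd R M))
  exact Finite.of_surjective _ (Ideal.Quotient.factor_surjective hI)

theorem finite_of_exact {A B C : Type*} [AddCommGroup A] [AddCommGroup B] [AddCommGroup C]
    [Finite A] [Finite C] {f : A →+ B} {g : B →+ C} (hfg : Function.Exact f g) : Finite B := by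
  have : Finite g.ker := hfg.addMonoidHom_ker_eq ▸ Set.finite_range f
  have : Finite (B ⧸ g.ker) := Finite.of_injective _ (QuotientAddGroup.kerLift_injective g)
  exact .of_addSubgroup_quotient (H := g.ker)

theorem finite_of_forall_finite_quotient_prime [IsNoetherianRing R] [Module.Finite R M]
    (h : ∀ P : Ideal R, P.IsPrime → Module.annihilator R M ≤ P → Finite (R ⧸ P)) : Finite M := by
  induction ‹Module.Finite R M› using
    IsNoetherianRing.induction_on_isQuotientEquivQuotientPrime R with
  | subsingleton N => exact inferInstance
  | quotient N P e =>
    have : Finite (R ⧸ P.asIdeal) :=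
      h P.asIdeal P.isPrime (by rw [e.annihilator_eq, Ideal.annihilator_quotient])
    exact .of_equiv _ e.symm.toEquiv
  | exact N₁ N₂ N₃ f g hf hg hfg ih₁ ih₃ =>
    have : Finite N₁ := ih₁ fun P hP hle ↦ h P hP ((f.annihilator_le_of_injective hf).trans hle)
    have : Finite N₃ := ih₃ fun P hP hle ↦ h P hP ((g.annihilator_le_of_surjective hg).trans hle)
    exact finite_of_exact (f := f.toAddMonoidHom) (g := g.toAddMonoidHom) hfg

end FiniteModules

section Height

variable {R : Type*} [CommRing R]

theorem heightOne_iff_height_eq_one {P : Ideal R} (hP : P.IsPrime) :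
    P.HeightOne hP ↔ P.height = 1 := by
  rw [Ideal.HeightOne, ← PrimeSpectrum.height_eq_orderHeight]

theorem exists_isPrime_height_eq_one [IsNoetherianRing R] [IsDomain R] (hR : ¬ IsField R) :
    ∃ Q : Ideal R, Q.IsPrime ∧ Q.height = 1 := by
  obtain ⟨x, hx₀, hx⟩ := Ring.exists_not_isUnit_of_not_isField hR
  obtain ⟨Q, hQ, -, hQ₁⟩ := Ideal.exists_isPrime_height_eq (n := 1) <|
    Ideal.height_span_singleton_eq_one_of_mem_nonZeroDivisors
      (mem_nonZeroDivisors_of_ne_zero hx₀) hx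
  exact ⟨Q, hQ, hQ₁⟩

theorem exists_le_isPrime_height_eq_one_of_lt [IsNoetherianRing R] [IsDomain R] {P 𝔪 : Ideal R}
    [P.IsPrime] [𝔪.IsPrime] (hlt : P < 𝔪) (h𝔪 : 𝔪.height ≤ 2) :
    ∃ Q : Ideal R, Q.IsPrime ∧ P ≤ Q ∧ Q.height = 1 := by
  have hP : P.height ≤ 1 := by
    have := (Ideal.height_add_one_le_of_lt_of_isPrime hlt).trans h𝔪
    rwa [← one_add_one_eq_two, ENat.add_le_add_iff_right ENat.one_ne_top] at this
  obtain h₀ | h₁ := Order.le_one_iff.mp hP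
  · have hR : ¬ IsField R :=
      Ring.not_isField_iff_exists_prime.mpr ⟨𝔪, hlt.ne_bot, inferInstance⟩
    obtain ⟨Q, hQ, hQ₁⟩ := exists_isPrime_height_eq_one hR
    exact ⟨Q, hQ, Ideal.height_eq_zero_iff_eq_bot.mp h₀ ▸ bot_le, hQ₁⟩
  · exact ⟨P, inferInstance, le_rfl, h₁⟩

end Height

section PowerSeries

open PowerSeries IsLocalRing

variable {R : Type*} [CommRing R]

theorem X_mem_jacobson_powerSeries : (X : R⟦X⟧) ∈ Ring.jacobson R⟦X⟧ := by
  rw [← Ideal.jacobson_bot, Ideal.mem_jacobson_bot]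
  intro f
  simp [isUnit_iff_constantCoeff]

theorem ker_constantCoeff_eq_span_X : RingHom.ker (constantCoeff (R := R)) = Ideal.span {X} := by
  ext f
  rw [RingHom.mem_ker, Ideal.mem_span_singleton, X_dvd_iff]

theorem ringKrullDim_powerSeries [IsNoetherianRing R] :
    ringKrullDim R⟦X⟧ = ringKrullDim R + 1 := by
  have hX : IsSMulRegular R⟦X⟧ (X : R⟦X⟧) := X_mul_injective
  have hquot : ringKrullDim (R⟦X⟧ ⧸ Ideal.span {(X : R⟦X⟧)}) = ringKrullDim R := by
    rw [← ker_constantCoeff_eq_span_X]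
    exact ringKrullDim_eq_of_ringEquiv (RingHom.quotientKerEquivOfSurjective constantCoeff_surj)
  rw [← hquot, ringKrullDim_quotient_span_singleton_succ_eq_ringKrullDim_of_mem_jacobson hX
    X_mem_jacobson_powerSeries]

instance isLocalHom_constantCoeff : IsLocalHom (constantCoeff (R := R)) :=
  ⟨fun _ ↦ isUnit_iff_constantCoeff.mpr⟩

instance finite_residueField_powerSeries [IsLocalRing R] [Finite (ResidueField R)] :
    Finite (ResidueField R⟦X⟧) :=
  .of_injective (ResidueField.map constantCoeff) (RingHom.injective _)

theorem finite_quotient_powerSeries_of_isMaximal [IsLocalRing R] [Finite (ResidueField R)]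
    {𝔪 : Ideal R⟦X⟧} (h𝔪 : 𝔪.IsMaximal) : Finite (R⟦X⟧ ⧸ 𝔪) :=
  eq_maximalIdeal h𝔪 ▸ finite_residueField_powerSeries

theorem height_maximalIdeal_powerSeries [IsNoetherianRing R] [IsLocalRing R] :
    (maximalIdeal R⟦X⟧).height = (maximalIdeal R).height + 1 := by
  have h := ringKrullDim_powerSeries (R := R)
  simp only [← maximalIdeal_height_eq_ringKrullDim] at h
  exact_mod_cast h

theorem height_maximalIdeal_eq_one [IsDomain R] [IsDiscreteValuationRing R] :
    (maximalIdeal R).height = 1 := by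
  have h := IsDiscreteValuationRing.ringKrullDim_eq_one R
  rw [← maximalIdeal_height_eq_ringKrullDim] at h
  exact_mod_cast h

theorem height_powerSeries_eq_two_of_isMaximal [IsDomain R] [IsDiscreteValuationRing R]
    {𝔪 : Ideal R⟦X⟧} (h𝔪 : 𝔪.IsMaximal) : 𝔪.height = 2 := by
  rw [eq_maximalIdeal h𝔪, height_maximalIdeal_powerSeries, height_maximalIdeal_eq_one,
    one_add_one_eq_two]

end PowerSeries

theorem finite_iff_pseudoNull_over_powerSeries_padicInt_general
    {R M : Type*} [CommRing R] [IsDomain R] [IsNoetherianRing R]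
    (hheight : ∀ 𝔪 : Ideal R, 𝔪.IsMaximal → 𝔪.height = 2)
    (hfinite : ∀ 𝔪 : Ideal R, 𝔪.IsMaximal → Finite (R ⧸ 𝔪))
    [AddCommGroup M] [Module R M] [Module.Finite R M] :
    Finite M ↔
      ∀ (P : Ideal R) (hP : P.IsPrime), P.HeightOne hP → ¬ Module.annihilator R M ≤ P := by
  simp only [heightOne_iff_height_eq_one]
  constructor
  · intro _ P hP hP₁ hle
    have : Finite (R ⧸ P) := finite_quotient_of_annihilator_le hle
    have hmax : P.IsMaximal := Ideal.Quotient.maximal_of_isField P (Finite.isField_of_domain _)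
    exact absurd (hP₁.symm.trans (hheight P hmax)) (by decide)
  · intro hnull
    refine finite_of_forall_finite_quotient_prime (R := R) fun P hP hle ↦ hfinite P ?_
    obtain ⟨𝔪, hmax, hP𝔪⟩ := P.exists_le_maximal hP.ne_top
    obtain rfl | hlt := hP𝔪.eq_or_lt
    · exact hmax
    · obtain ⟨Q, hQ, hPQ, hQ₁⟩ := exists_le_isPrime_height_eq_one_of_lt hlt (hheight 𝔪 hmax).le
      exact absurd (hle.trans hPQ) (hnull Q hQ hQ₁)

/-- Let `Λ = ℤ_p[[T]]` and let `M` be a finitely generated `Λ`-module. Then `M` is finite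
as a set if and only if the annihilator ideal of `M` in `Λ` is not contained in any
height one prime ideal of `Λ`, i.e. iff `M` is pseudo-null. -/
theorem finite_iff_pseudoNull_over_powerSeries_padicInt
    (p : ℕ) [Fact p.Prime] (M : Type*) [AddCommGroup M]
    [Module (PowerSeries ℤ_[p]) M] [Module.Finite (PowerSeries ℤ_[p]) M] :
    Finite M ↔
      ∀ (P : Ideal (PowerSeries ℤ_[p])) (hP : P.IsPrime), P.HeightOne hP →
        ¬ Module.annihilator (PowerSeries ℤ_[p]) M ≤ P :=
  finite_iff_pseudoNull_over_powerSeries_padicInt_general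
    (fun _ ↦ height_powerSeries_eq_two_of_isMaximal)
    (fun _ ↦ finite_quotient_powerSeries_of_isMaximal)
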